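/- For every parameter α = (α_0, α_1, α_2) ∈ ℂ^3 and every pair (a, b) ∈ ℂ^2, there exists a unique formal meromorphic solution (c_n^i) of the A_2^(1) system at t_0 of pole order 1 with (c_{−1}^0, c_{−1}^1, c_{−1}^2) = (−1, 0, 1), c_0^0 = a and c_2^1 = b. Moreover every formal meromorphic solution of pole order 1 with residue vector (−1, 0, 1) satisfies c_0^1 = 0, c_0^2 = c_0^0, c_1^1 = −α_1, c_1^0 = ((2α_0 + 3α_1 + α_2) − (c_0^0)^2)/3 and c_1^2 = ((α_0 + 3α_1 + 2α_2) + (c_0^0)^2)/3. -/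

import Mathlib

/-!
Write `n = m - 1` and `u m i = c i (m - 1)`. The system becomes a recursion over `m : ℕ` whose
right-hand side is a convolution over `{0, …, m}`. In degree `n = k ≥ 0` the terms that contain
the new coefficients `x = u (k+1) 0`, `y = u (k+1) 1`, `z = u (k+1) 2` are, for the residue vector
`(-1, 0, 1)`, linear, and the equations read
  `(k+1) x + y - z = R₀`, `(k-2) y = R₁`, `-x + y + (k+1) z = R₂`,
where `Rᵢ` involves strictly earlier coefficients only (`linear_iff`). The determinant is
`k (k+2) (k-2)`, so the only resonances in degrees `k ≥ 0` are `k = 0`, where all `Rᵢ` vanish and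
the solutions are `(a, 0, a)`, and `k = 2`, where `y = b` is free and the compatibility condition
`R₁ = 0` holds because `c 1 0 = 0` and `c 2 0 = c 0 0`. Hence normalized solutions are
precisely the sequences given by the recursion `step` (`recursion_iff`), and such a recursion has
exactly one solution (`existsUnique_of_causal`). The low-order formulas come from the linear
equations for `k = 0, 1`.
-/

/-- A formal meromorphic solution of the `A₂⁽¹⁾` system
`fᵢ' = fᵢ (fᵢ₊₁ − fᵢ₊₂) + αᵢ` (indices mod 3) at a point `t₀`, of pole order `r ≥ 1`. -/
def IsFormalMeromSolA2 (α : Fin 3 → ℂ) (r : ℤ) (c : Fin 3 → ℤ → ℂ) : Prop :=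
  1 ≤ r ∧
  (∃ i : Fin 3, c i (-r) ≠ 0) ∧
  (∀ (i : Fin 3) (n : ℤ), n < -r → c i n = 0) ∧
  ∀ (i : Fin 3) (n : ℤ),
    (n : ℂ) * c i n =
      (∑ k ∈ Finset.Icc (-r) (n + r - 1),
        c i k * (c (i + 1) (n - k - 1) - c (i + 2) (n - k - 1))) +
      (if n = 1 then α i else 0)

/-- A recursion in which each value is determined by the strictly earlier ones has exactly one
solution. -/
theorem existsUnique_of_causal {V : Type*} [Inhabited V] (s : ℕ → (ℕ → V) → V)
    (hs : ∀ m f g, (∀ j < m, f j = g j) → s m f = s m g) :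
    ∃! u : ℕ → V, ∀ m, u m = s m u := by
  let w : ℕ → V := fun m => Nat.strongRec (motive := fun _ => V)
    (fun m ih => s m (fun j => if h : j < m then ih j h else default)) m
  have hw : ∀ m, w m = s m w := by
    intro m
    have h : w m = s m (fun j => if j < m then w j else default) := by
      simp only [w]
      rw [Nat.strongRec_eq]
      rfl
    rw [h]
    exact hs m _ _ fun j hj => by simp [hj]
  refine ⟨w, hw, fun v hv => funext fun m => ?_⟩
  induction m using Nat.strong_induction_on with
  | _ m ih => rw [hv m, hw m]; exact hs m _ _ ih

/-- The equation of degree `n = m - 1` for the shifted coefficients `u m i = c i (m - 1)`. -/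
def ShiftedEq (α : Fin 3 → ℂ) (u : ℕ → Fin 3 → ℂ) (i : Fin 3) (m : ℕ) : Prop :=
  ((m : ℂ) - 1) * u m i =
    (∑ j ∈ Finset.range (m + 1), u j i * (u (m - j) (i + 1) - u (m - j) (i + 2))) +
      (if m = 2 then α i else 0)

/-- The part of the equation of degree `k` that involves only coefficients of degrees
`0, …, k - 1`. -/
noncomputable def rest (α : Fin 3 → ℂ) (u : ℕ → Fin 3 → ℂ) (k : ℕ) (i : Fin 3) : ℂ :=
  (∑ j ∈ Finset.range k, u (j + 1) i * (u (k - j) (i + 1) - u (k - j) (i + 2))) +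
    (if k = 1 then α i else 0)

/-- The coefficient vector of degree `m - 1` as a function of the earlier ones; `a` and `b` are the
free parameters in degrees `0` and `2`. -/
noncomputable def step (α : Fin 3 → ℂ) (a b : ℂ) : ℕ → (ℕ → Fin 3 → ℂ) → Fin 3 → ℂ
  | 0, _ => ![-1, 0, 1]
  | 1, _ => ![a, 0, a]
  | k + 2, u =>
    let n : ℂ := (k : ℂ) + 1
    let y : ℂ := if k = 1 then b else rest α u (k + 1) 1 / (n - 2)
    let p := rest α u (k + 1) 0 - y
    let q := rest α u (k + 1) 2 - y
    ![((n + 1) * p + q) / (n * (n + 2)), y, (p + (n + 1) * q) / (n * (n + 2))]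

theorem rest_congr (α : Fin 3 → ℂ) {u v : ℕ → Fin 3 → ℂ} {k : ℕ}
    (h : ∀ j < k + 1, u j = v j) : rest α u k = rest α v k := by
  funext i
  unfold rest
  congr 1
  refine Finset.sum_congr rfl fun j hj => ?_
  have hj := Finset.mem_range.1 hj
  rw [h (j + 1) (by omega), h (k - j) (by omega)]

theorem step_causal (α : Fin 3 → ℂ) (a b : ℂ) (m : ℕ) (u v : ℕ → Fin 3 → ℂ)
    (h : ∀ j < m, u j = v j) : step α a b m u = step α a b m v := by
  match m with
  | 0 => rfl
  | 1 => rfl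
  | k + 2 => simp only [step, rest_congr α h]

/-- The equations of degree `k` form a linear system for the coefficients of degree `k`. -/
theorem linear_iff (α : Fin 3 → ℂ) (u : ℕ → Fin 3 → ℂ) (h0 : u 0 = ![-1, 0, 1]) (k : ℕ) :
    (∀ i, ShiftedEq α u i (k + 1)) ↔
      ((k : ℂ) + 1) * u (k + 1) 0 + u (k + 1) 1 - u (k + 1) 2 = rest α u k 0 ∧
      ((k : ℂ) - 2) * u (k + 1) 1 = rest α u k 1 ∧
      -u (k + 1) 0 + u (k + 1) 1 + ((k : ℂ) + 1) * u (k + 1) 2 = rest α u k 2 := by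
  have split : ∀ i, ShiftedEq α u i (k + 1) ↔ (k : ℂ) * u (k + 1) i =
      rest α u k i + u 0 i * (u (k + 1) (i + 1) - u (k + 1) (i + 2)) +
        u (k + 1) i * (u 0 (i + 1) - u 0 (i + 2)) := by
    intro i
    unfold ShiftedEq rest
    rw [Finset.sum_range_succ, Finset.sum_range_succ']
    simp only [Nat.add_sub_add_right, Nat.sub_self, Nat.sub_zero,
      Nat.reduceEqDiff]
    push_cast
    constructor <;> intro h <;> linear_combination h
  have e1 : (1 : Fin 3) + 1 = 2 := rfl
  have e2 : (1 : Fin 3) + 2 = 0 := rfl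
  have e3 : (2 : Fin 3) + 1 = 0 := rfl
  have e4 : (2 : Fin 3) + 2 = 1 := rfl
  have v0 : u 0 0 = -1 := by simp [h0]
  have v1 : u 0 1 = 0 := by simp [h0]
  have v2 : u 0 2 = 1 := by simp [h0]
  simp only [split, Fin.forall_fin_succ, IsEmpty.forall_iff, and_true, Fin.succ_zero_eq_one,
    Fin.succ_one_eq_two, zero_add, e1, e2, e3, e4, v0, v1, v2]
  refine and_congr ?_ (and_congr ?_ ?_) <;> constructor <;> intro h <;> linear_combination h

/-- The linear system in degree `0`. -/
theorem degree_zero_iff (α : Fin 3 → ℂ) (u : ℕ → Fin 3 → ℂ) (h0 : u 0 = ![-1, 0, 1]) :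
    (∀ i, ShiftedEq α u i 1) ↔ u 1 1 = 0 ∧ u 1 2 = u 1 0 := by
  rw [linear_iff α u h0 0]
  simp only [rest, Finset.range_zero, Finset.sum_empty, Nat.cast_zero, zero_add]
  norm_num
  constructor
  · rintro ⟨h, h1, -⟩
    exact ⟨h1, by linear_combination h1 - h⟩
  · rintro ⟨h1, h2⟩
    exact ⟨by linear_combination h1 - h2, h1, by linear_combination h1 + h2⟩

theorem rest_one (α : Fin 3 → ℂ) (u : ℕ → Fin 3 → ℂ) (i : Fin 3) :
    rest α u 1 i = u 1 i * (u 1 (i + 1) - u 1 (i + 2)) + α i := by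
  simp [rest]

/-- The compatibility condition at the resonance in degree `2`. -/
theorem rest_two (α : Fin 3 → ℂ) (u : ℕ → Fin 3 → ℂ) (h1 : u 1 1 = 0) (h2 : u 1 2 = u 1 0) :
    rest α u 2 1 = 0 := by
  have e1 : (1 : Fin 3) + 1 = 2 := rfl
  have e2 : (1 : Fin 3) + 2 = 0 := rfl
  simp [rest, Finset.sum_range_succ, e1, e2, h1, h2]

/-- Cramer's rule for the `2 × 2` system satisfied by the components `0` and `2`. -/
theorem solve_two {n x z p q : ℂ} (hn : n ≠ 0) (hn2 : n + 2 ≠ 0) :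
    ((n + 1) * x - z = p ∧ -x + (n + 1) * z = q) ↔
      x = ((n + 1) * p + q) / (n * (n + 2)) ∧ z = (p + (n + 1) * q) / (n * (n + 2)) := by
  constructor
  · rintro ⟨rfl, rfl⟩
    constructor <;> field_simp <;> ring
  · rintro ⟨rfl, rfl⟩
    constructor <;> field_simp <;> ring

/-- Normalized solutions of the shifted equations are the solutions of the recursion `step`. -/
theorem recursion_iff (α : Fin 3 → ℂ) (a b : ℂ) (u : ℕ → Fin 3 → ℂ) :
    ((∀ i m, ShiftedEq α u i m) ∧ u 0 = ![-1, 0, 1] ∧ u 1 0 = a ∧ u 3 1 = b) ↔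
      ∀ m, u m = step α a b m u := by
  have vec : ∀ (v : Fin 3 → ℂ) (x y z : ℂ), v = ![x, y, z] ↔ v 0 = x ∧ v 1 = y ∧ v 2 = z := by
    intro v x y z
    constructor
    · rintro rfl
      simp
    · rintro ⟨rfl, rfl, rfl⟩
      funext i
      fin_cases i <;> rfl
  have ne : ∀ k : ℕ, ((k : ℂ) + 1) ≠ 0 ∧ ((k : ℂ) + 1 + 2) ≠ 0 := fun k =>
    ⟨by exact_mod_cast Nat.succ_ne_zero k, by exact_mod_cast Nat.succ_ne_zero (k + 2)⟩
  have ne' : ∀ k : ℕ, k ≠ 1 → (k : ℂ) + 1 - 2 ≠ 0 := by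
    intro k hk h
    apply hk
    have : (k : ℂ) = 1 := by linear_combination h
    exact_mod_cast this
  constructor
  · rintro ⟨h, h0, ha, hb⟩ m
    match m with
    | 0 => exact h0
    | 1 =>
      obtain ⟨h1, h2⟩ := (degree_zero_iff α u h0).1 fun i => h i 1
      simp only [step, vec]
      exact ⟨ha, h1, h2.trans ha⟩
    | k + 2 =>
      obtain ⟨g0, g1, g2⟩ := (linear_iff α u h0 (k + 1)).1 fun i => h i _
      push_cast at g0 g1 g2
      have hy : u (k + 2) 1 = if k = 1 then b else rest α u (k + 1) 1 / ((k : ℂ) + 1 - 2) := by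
        split_ifs with hk
        · subst hk
          exact hb
        · rw [eq_div_iff (ne' k hk)]
          linear_combination g1
      simp only [step, vec]
      rw [← hy]
      have := (solve_two (x := u (k + 2) 0) (z := u (k + 2) 2) (ne k).1 (ne k).2).1
        ⟨show _ = rest α u (k + 1) 0 - u (k + 2) 1 by linear_combination g0,
          show _ = rest α u (k + 1) 2 - u (k + 2) 1 by linear_combination g2⟩
      exact ⟨this.1, rfl, this.2⟩
  · intro h
    have h0 : u 0 = ![-1, 0, 1] := h 0
    have h1 := h 1
    simp only [step, vec] at h1
    obtain ⟨ha, h11, h12⟩ := h1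
    have hb : u 3 1 = b := by rw [h 3]; simp [step]
    refine ⟨fun i m => ?_, h0, ha, hb⟩
    match m with
    | 0 =>
      have e1 : (1 : Fin 3) + 1 = 2 := rfl
      have e2 : (1 : Fin 3) + 2 = 0 := rfl
      have e3 : (2 : Fin 3) + 1 = 0 := rfl
      have e4 : (2 : Fin 3) + 2 = 1 := rfl
      fin_cases i <;> simp [ShiftedEq, h0, e1, e2, e3, e4]
    | 1 => exact (degree_zero_iff α u h0).2 ⟨h11, h12.trans ha.symm⟩ i
    | k + 2 =>
      have hk := h (k + 2)
      simp only [step, vec] at hk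
      obtain ⟨hx, hy, hz⟩ := hk
      rw [← hy] at hx hz
      obtain ⟨g0, g2⟩ := (solve_two (ne k).1 (ne k).2).2 ⟨hx, hz⟩
      refine (linear_iff α u h0 (k + 1)).2 ⟨?_, ?_, ?_⟩ i <;> push_cast
      · linear_combination g0
      · by_cases hk1 : k = 1
        · subst hk1
          rw [rest_two α u h11 (h12.trans ha.symm)]
          norm_num
        · rw [if_neg hk1, eq_div_iff (ne' k hk1)] at hy
          linear_combination hy
      · linear_combination g2

/-- The defining equation in degree `m - 1` is the shifted equation at `m`. -/
theorem eq_iff_shiftedEq (α : Fin 3 → ℂ) (c : Fin 3 → ℤ → ℂ) (i : Fin 3) (m : ℕ) :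
    ((((m : ℤ) - 1 : ℤ) : ℂ) * c i ((m : ℤ) - 1) =
      (∑ k ∈ Finset.Icc (-1 : ℤ) ((m : ℤ) - 1 + 1 - 1),
        c i k * (c (i + 1) ((m : ℤ) - 1 - k - 1) - c (i + 2) ((m : ℤ) - 1 - k - 1))) +
      (if (m : ℤ) - 1 = 1 then α i else 0)) ↔
    ShiftedEq α (fun m i => c i ((m : ℤ) - 1)) i m := by
  have hsum : (∑ k ∈ Finset.Icc (-1 : ℤ) ((m : ℤ) - 1 + 1 - 1),
        c i k * (c (i + 1) ((m : ℤ) - 1 - k - 1) - c (i + 2) ((m : ℤ) - 1 - k - 1))) =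
      ∑ j ∈ Finset.range (m + 1), c i ((j : ℤ) - 1) *
        (c (i + 1) (((m - j : ℕ) : ℤ) - 1) - c (i + 2) (((m - j : ℕ) : ℤ) - 1)) := by
    symm
    refine Finset.sum_bij (fun (j : ℕ) _ => (j : ℤ) - 1) ?_ ?_ ?_ ?_
    · intro j hj
      simp only [Finset.mem_range, Finset.mem_Icc] at *
      omega
    · intro j _ l _ h
      omega
    · intro k hk
      simp only [Finset.mem_Icc] at hk
      exact ⟨(k + 1).toNat, by simp only [Finset.mem_range]; omega, by omega⟩
    · intro j hj
      have hj := Finset.mem_range.1 hj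
      have : (m : ℤ) - 1 - ((j : ℤ) - 1) - 1 = ((m - j : ℕ) : ℤ) - 1 := by omega
      rw [this]
  have hif : (m : ℤ) - 1 = 1 ↔ m = 2 := by omega
  rw [hsum, ShiftedEq]
  simp only [hif]
  push_cast
  rfl

theorem isFormalMeromSolA2_iff (α : Fin 3 → ℂ) (c : Fin 3 → ℤ → ℂ) :
    IsFormalMeromSolA2 α 1 c ↔
      (∃ i, c i (-1) ≠ 0) ∧ (∀ i n, n < -1 → c i n = 0) ∧
        ∀ i m, ShiftedEq α (fun m i => c i ((m : ℤ) - 1)) i m := by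
  unfold IsFormalMeromSolA2
  constructor
  · rintro ⟨-, h1, h2, h3⟩
    exact ⟨h1, h2, fun i m => (eq_iff_shiftedEq α c i m).1 (h3 i _)⟩
  · rintro ⟨h1, h2, h3⟩
    refine ⟨le_rfl, h1, h2, fun i n => ?_⟩
    by_cases hn : n < -1
    · rw [h2 i n hn, Finset.Icc_eq_empty (by omega), if_neg (by omega)]
      simp
    · obtain ⟨m, rfl⟩ : ∃ m : ℕ, n = (m : ℤ) - 1 := ⟨(n + 1).toNat, by omega⟩
      exact (eq_iff_shiftedEq α c i m).2 (h3 i m)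


/-- For each `α ∈ ℂ³` and `(a,b) ∈ ℂ²` there is a unique formal meromorphic
solution of the `A₂⁽¹⁾` system of pole order 1 with residue vector `(−1,0,1)`,
`c₀⁰ = a` and `c₂¹ = b`; moreover every pole-order-1 formal solution with this
residue vector satisfies `c₀¹ = 0`, `c₀² = c₀⁰`, `c₁¹ = −α₁`,
`c₁⁰ = ((2α₀+3α₁+α₂) − (c₀⁰)²)/3` and `c₁² = ((α₀+3α₁+2α₂) + (c₀⁰)²)/3`. -/
theorem formalSol_type1_A2 (α : Fin 3 → ℂ) (a b : ℂ) :
    (∃! c : Fin 3 → ℤ → ℂ,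
      IsFormalMeromSolA2 α 1 c ∧
      c 0 (-1) = -1 ∧ c 1 (-1) = 0 ∧ c 2 (-1) = 1 ∧
      c 0 0 = a ∧ c 1 2 = b) ∧
    (∀ c : Fin 3 → ℤ → ℂ,
      IsFormalMeromSolA2 α 1 c →
      c 0 (-1) = -1 → c 1 (-1) = 0 → c 2 (-1) = 1 →
      c 1 0 = 0 ∧ c 2 0 = c 0 0 ∧ c 1 1 = -α 1 ∧
      c 0 1 = ((2 * α 0 + 3 * α 1 + α 2) - (c 0 0) ^ 2) / 3 ∧
      c 2 1 = ((α 0 + 3 * α 1 + 2 * α 2) + (c 0 0) ^ 2) / 3) := by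
  have residue : ∀ c : Fin 3 → ℤ → ℂ, c 0 (-1) = -1 → c 1 (-1) = 0 → c 2 (-1) = 1 →
      (fun (m : ℕ) i => c i ((m : ℤ) - 1)) 0 = ![-1, 0, 1] := by
    intro c h0 h1 h2
    funext i
    fin_cases i <;> simp [h0, h1, h2]
  constructor
  · obtain ⟨u, hu, huniq⟩ := existsUnique_of_causal (step α a b) (step_causal α a b)
    refine ⟨fun i n => if n < -1 then 0 else u (n + 1).toNat i, ?_, ?_⟩
    · obtain ⟨he, h0, ha, hb⟩ := (recursion_iff α a b u).2 hu
      dsimp only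
      refine ⟨(isFormalMeromSolA2_iff α _).2 ⟨⟨0, by simp [h0]⟩, ?_, ?_⟩,
        by simp [h0], by simp [h0], by simp [h0], by simpa using ha, by simpa using hb⟩
      · intro i n hn
        simp [hn]
      · have : (fun (m : ℕ) i => if (m : ℤ) - 1 < -1 then 0 else u ((m : ℤ) - 1 + 1).toNat i)
            = u := by
          funext m i
          rw [if_neg (by omega)]
          simp
        rw [this]
        exact he
    · rintro c ⟨hc, h0, h1, h2, ha, hb⟩
      obtain ⟨-, hz, he⟩ := (isFormalMeromSolA2_iff α c).1 hc
      have hcu := huniq _ ((recursion_iff α a b _).1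
        ⟨he, residue c h0 h1 h2, by simpa using ha, by simpa using hb⟩)
      funext i n
      split_ifs with hn
      · exact hz i n hn
      · rw [← hcu]
        have : (((n + 1).toNat : ℕ) : ℤ) - 1 = n := by omega
        dsimp only
        rw [this]
  · intro c hc h0 h1 h2
    obtain ⟨-, -, he⟩ := (isFormalMeromSolA2_iff α c).1 hc
    have hr := residue c h0 h1 h2
    obtain ⟨d1, d2⟩ := (degree_zero_iff α _ hr).1 fun i => he i 1
    obtain ⟨g0, g1, g2⟩ := (linear_iff α _ hr 1).1 fun i => he i 2
    have e1 : (1 : Fin 3) + 1 = 2 := rfl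
    have e2 : (1 : Fin 3) + 2 = 0 := rfl
    have e3 : (2 : Fin 3) + 1 = 0 := rfl
    have e4 : (2 : Fin 3) + 2 = 1 := rfl
    simp only [rest_one, e1, e2, e3, e4, zero_add] at g0 g1 g2
    norm_num at d1 d2 g0 g1 g2
    simp only [d1, d2] at g0 g1 g2
    have hy : c 1 1 = -α 1 := by linear_combination -g1
    refine ⟨d1, d2, hy, ?_, ?_⟩
    · linear_combination (2 * g0 + g2) / 3 - hy
    · linear_combination (g0 + 2 * g2) / 3 - hy
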